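/- There exist constants c > 0 and ρ > 0 such that for every ε > 0 there is a natural number M₀ with the following property: for all M ≥ M₀ and all natural numbers H with 1 ≤ H ≤ ρ·M, letting B = {δ : Matrix (Fin M) (Fin M) (ZMod 2) | δ·δ = 0 ∧ M − 2·rank(δ) = H}, the number of pairs (δ₁, δ₂) ∈ B × B for which there exists an M×M matrix ψ over ZMod 2 with 0 < wt(ψ) < c·M² satisfying either (δ₁·ψ + ψ·δ₂ᵀ = 0 and ψ is not of the form δ₁·φ + φ·δ₂ᵀ) or (δ₁ᵀ·ψ + ψ·δ₂ = 0 and ψ is not of the form δ₁ᵀ·φ + φ·δ₂) is at most ε · |B|². In other words, for sufficiently small c and encoding rate, the probability that the homological product of two uniformly random boundary operators has distance less than c·M² is o(1). -/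

import Mathlib

open Matrix

/-- The weight of a matrix over `ZMod 2`: its number of nonzero entries. -/
def mwt {m n : ℕ} (A : Matrix (Fin m) (Fin n) (ZMod 2)) : ℕ :=
  (Finset.univ.filter fun p : Fin m × Fin n => A p.1 p.2 ≠ 0).card

/-!
Call a set of coordinates light if it is a small constant fraction of all coordinates, and let `ψ`
be a light cycle of the product. By Markov's inequality the heavy rows and the heavy columns of `ψ`
form light sets `I` and `J`, and erasing them leaves a matrix `θ` with light rows and columns.

The core of a subspace `T` under `δ` consists of the `v ∈ T` with `δ v ∈ T`. With high probability
the core of the vectors supported on a light set is trivial, so that a projection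
`1 - h δ - δ h`, homotopic to the identity, kills everything supported on `I`, and similarly for
`J`. If `θ = 0`, it follows that `ψ` is a boundary. Otherwise the rank of `θ` is at most the sum of
the dimensions of the cores, under `δ₁` and `δ₂`, of the subspaces spanned by the columns (resp.
rows) of `θ` and the vectors supported on `I` (resp. `J`). With high probability each of these
dimensions is less than half the rank of `θ` as long as this rank is small, a contradiction, and
there are no light cycles of large rank.

The probabilities are bounded by a union bound over light vectors. As the distribution of `δ` is
invariant under conjugation, the probability that `δ` vanishes on given linearly independent vectors
is bounded by exchanging the roles: fix `δ` and let the vectors be random. Prescribed values reduce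
to this case, since `δ² = 0` makes `δ` vanish on the values.
-/

namespace ProductCode

open Finset Module

section UniformProbability

variable {α β ι : Type*}

open Classical in
/-- The probability that a uniformly random element of the finite set `B` satisfies `P`; for
empty `B` the quotient `0 / 0` makes it `0`. -/
noncomputable def unifProb (B : Finset α) (P : α → Prop) : ℝ :=
  (#{a ∈ B | P a} : ℝ) / #B

lemma natCard_subtype_le_unifProb_mul_card {B : Finset α} {P Q : α → Prop}
    (h : ∀ a, P a → a ∈ B ∧ Q a) : (Nat.card {a // P a} : ℝ) ≤ unifProb B Q * #B := by
  classical
  have hsub : {a | P a} ⊆ (({a ∈ B | Q a} : Finset α) : Set α) := fun a ha ↦ by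
    simpa using h a ha
  have hcard : Nat.card {a // P a} ≤ #{a ∈ B | Q a} :=
    (Set.ncard_le_ncard hsub).trans_eq (Set.ncard_coe_finset _)
  rcases B.eq_empty_or_nonempty with rfl | hB
  · simpa using hcard
  · rw [unifProb, div_mul_cancel₀ _ (by simpa using hB.ne_empty)]
    exact mod_cast hcard

lemma unifProb_mono {B : Finset α} {P Q : α → Prop} (h : ∀ a ∈ B, P a → Q a) :
    unifProb B P ≤ unifProb B Q := by
  classical
  unfold unifProb
  gcongr ?_ / _
  exact mod_cast card_le_card fun a ha ↦ by
    rw [mem_filter] at ha ⊢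
    exact ⟨ha.1, h a ha.1 ha.2⟩

lemma unifProb_or_le (B : Finset α) (P Q : α → Prop) :
    unifProb B (fun a ↦ P a ∨ Q a) ≤ unifProb B P + unifProb B Q := by
  classical
  simp only [unifProb]
  rw [← add_div, filter_or]
  gcongr
  exact mod_cast card_union_le _ _

lemma unifProb_exists_le {B : Finset α} (s : Finset ι) (P : ι → α → Prop) {r : ℝ}
    (h : ∀ i ∈ s, unifProb B (P i) ≤ r) :
    unifProb B (fun a ↦ ∃ i ∈ s, P i a) ≤ #s * r := by
  classical
  calc unifProb B (fun a ↦ ∃ i ∈ s, P i a)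
      ≤ ∑ i ∈ s, unifProb B (P i) := by
        simp only [unifProb]
        rw [← sum_div]
        gcongr ?_ / _
        have hcover : ({a ∈ B | ∃ i ∈ s, P i a} : Finset α) ⊆
            s.biUnion fun i ↦ {a ∈ B | P i a} := by
          intro a
          simp only [mem_filter, mem_biUnion]
          rintro ⟨ha, i, hi, hPi⟩
          exact ⟨i, hi, ha, hPi⟩
        exact mod_cast (card_le_card hcover).trans card_biUnion_le
    _ ≤ #s * r := by simpa using sum_le_card_nsmul s _ r h

lemma unifProb_comp_equiv {A : Finset α} {B : Finset β} (e : α ≃ β)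
    (he : ∀ a, a ∈ A ↔ e a ∈ B) (P : β → Prop) :
    unifProb A (fun a ↦ P (e a)) = unifProb B P := by
  classical
  unfold unifProb
  congr 2
  · exact card_equiv e fun a ↦ by simp only [mem_filter, he]
  · exact card_equiv e he

lemma unifProb_product (A : Finset α) (B : Finset β) (P : α → β → Prop) :
    unifProb (A ×ˢ B) (fun p ↦ P p.1 p.2) = (∑ a ∈ A, unifProb B (P a)) / #A := by
  classical
  unfold unifProb
  rw [← sum_div, div_div, card_product, card_filter, sum_product]
  simp only [card_filter]
  push_cast
  rw [mul_comm]

lemma unifProb_product_swap (A : Finset α) (B : Finset β) (P : α → β → Prop) :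
    unifProb (A ×ˢ B) (fun p ↦ P p.1 p.2) = unifProb (B ×ˢ A) (fun p ↦ P p.2 p.1) :=
  unifProb_comp_equiv (Equiv.prodComm α β) (fun p ↦ by simp [and_comm]) fun p ↦ P p.2 p.1

lemma unifProb_product_le {A : Finset α} {B : Finset β} {P : α → β → Prop} {r : ℝ} (hr : 0 ≤ r)
    (h : ∀ a ∈ A, unifProb B (P a) ≤ r) :
    unifProb (A ×ˢ B) (fun p ↦ P p.1 p.2) ≤ r := by
  rw [unifProb_product]
  refine div_le_of_le_mul₀ (by positivity) hr ?_
  simpa [mul_comm] using sum_le_card_nsmul A _ r h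

lemma unifProb_product_or_le {B : Finset α} {P : α → Prop} {Q : α → α → Prop} {r : ℝ}
    (hr : 0 ≤ r) (hP : unifProb B P ≤ r) (hQ : ∀ a ∈ B, unifProb B (Q a) ≤ r) :
    unifProb (B ×ˢ B) (fun p ↦ (P p.1 ∨ P p.2) ∨ Q p.1 p.2) ≤ 3 * r := by
  have hP_snd : unifProb (B ×ˢ B) (fun p ↦ P p.2) ≤ r :=
    unifProb_product_le (P := fun _ ↦ P) hr fun _ _ ↦ hP
  have hP_fst : unifProb (B ×ˢ B) (fun p ↦ P p.1) ≤ r :=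
    (unifProb_product_swap B B fun a _ ↦ P a).trans_le hP_snd
  have hQ_both : unifProb (B ×ˢ B) (fun p ↦ Q p.1 p.2) ≤ r := unifProb_product_le hr hQ
  linarith [unifProb_or_le (B ×ˢ B) (fun p ↦ P p.1 ∨ P p.2) (fun p ↦ Q p.1 p.2),
    unifProb_or_le (B ×ˢ B) (fun p ↦ P p.1) (fun p ↦ P p.2)]

/- Double counting: by symmetry the left side is the probability that `P a b` holds for independent
uniform `a` and `b`, which can also be computed by fixing `a` first. -/
lemma unifProb_le_of_minimal {A : Finset α} {B : Finset β} {P : α → β → Prop} {b₀ : β} {r : ℝ}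
    (hr : 0 ≤ r) (hb₀ : b₀ ∈ B)
    (hmin : ∀ b ∈ B, unifProb A (fun a ↦ P a b₀) ≤ unifProb A (fun a ↦ P a b))
    (h : ∀ a ∈ A, unifProb B (P a) ≤ r) :
    unifProb A (fun a ↦ P a b₀) ≤ r := by
  refine le_trans ?_ (unifProb_product_le hr h)
  rw [unifProb_product_swap, unifProb_product B A fun b a ↦ P a b,
    le_div_iff₀ (by exact_mod_cast card_pos.2 ⟨b₀, hb₀⟩), mul_comm]
  simpa using card_nsmul_le_sum B _ _ hmin

end UniformProbability

section CoordinateSubspaces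

variable {K m : Type*} [Field K]

variable (K) in
/-- The space of vectors supported on `I`. -/
def coordSubspace (I : Finset m) : Submodule K (m → K) :=
  ⨅ i ∈ (I : Set m)ᶜ, LinearMap.ker (LinearMap.proj i)

lemma mem_coordSubspace {I : Finset m} {x : m → K} :
    x ∈ coordSubspace K I ↔ ∀ i ∉ I, x i = 0 := by
  simp [coordSubspace]

lemma finrank_coordSubspace (I : Finset m) : finrank K (coordSubspace K I) = #I := by
  classical
  have e : coordSubspace K I ≃ₗ[K] (↥(I : Set m) → K) :=
    LinearMap.iInfKerProjEquiv K (fun _ ↦ K) disjoint_compl_right (by simp)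
  simpa using e.finrank_eq

lemma finrank_span_sup_coordSubspace_le [Finite m] {R : ℕ} (v : Fin R → m → K) (I : Finset m) :
    finrank K ↥(Submodule.span K (Set.range v) ⊔ coordSubspace K I) ≤ R + #I := by
  refine (Submodule.finrank_add_le_finrank_add_finrank _ _).trans ?_
  rw [finrank_coordSubspace]
  gcongr
  simpa [Set.finrank] using finrank_range_le_card (R := K) v

variable [DecidableEq m]

variable (K) in
/-- The diagonal matrix that sets the coordinates in `I` to zero. -/
def eraseCoords (I : Finset m) : Matrix m m K :=
  diagonal fun i ↦ if i ∈ I then 0 else 1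

lemma eraseCoords_transpose (I : Finset m) : (eraseCoords K I)ᵀ = eraseCoords K I :=
  diagonal_transpose _

variable [Fintype m]

lemma eraseCoords_mulVec_apply (I : Finset m) (x : m → K) (i : m) :
    (eraseCoords K I *ᵥ x) i = if i ∈ I then 0 else x i := by
  simp [eraseCoords, mulVec_diagonal]

lemma eraseCoords_mulVec_eq_zero {I : Finset m} {x : m → K} (hx : x ∈ coordSubspace K I) :
    eraseCoords K I *ᵥ x = 0 := by
  ext i
  rw [eraseCoords_mulVec_apply]
  split_ifs with hi
  · rfl
  · exact mem_coordSubspace.1 hx i hi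

lemma sub_eraseCoords_mulVec_mem (I : Finset m) (x : m → K) :
    x - eraseCoords K I *ᵥ x ∈ coordSubspace K I :=
  mem_coordSubspace.2 fun i hi ↦ by simp [eraseCoords_mulVec_apply, hi]

lemma eraseCoords_mul_self (I : Finset m) :
    eraseCoords K I * eraseCoords K I = eraseCoords K I := by
  simp [eraseCoords, diagonal_mul_diagonal]

lemma mul_eraseCoords_eq_self {I : Finset m} {q : Matrix m m K}
    (h : ∀ x ∈ coordSubspace K I, q *ᵥ x = 0) : q * eraseCoords K I = q := by
  refine ext_of_mulVec_single fun i ↦ ?_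
  have hi := h _ (sub_eraseCoords_mulVec_mem I (Pi.single i 1))
  rw [mulVec_sub, sub_eq_zero] at hi
  rw [← mulVec_mulVec, ← hi]

lemma disjoint_range_coordSubspace {n : Type*} [Fintype n] {I : Finset m} {θ : Matrix m n K}
    (hθ : eraseCoords K I * θ = θ) :
    Disjoint (LinearMap.range θ.mulVecLin) (coordSubspace K I) := by
  rw [Submodule.disjoint_def]
  rintro _ ⟨x, rfl⟩ hx
  rw [← eraseCoords_mulVec_eq_zero hx, mulVecLin_apply, mulVec_mulVec, hθ]

end CoordinateSubspaces

section Core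

variable {K m : Type*} [Field K] [Fintype m]

/-- The core of `T` under `δ`: the vectors of `T` that `δ` maps into `T`. -/
def core (δ : Matrix m m K) (T : Submodule K (m → K)) : Submodule K (m → K) :=
  T ⊓ T.comap δ.mulVecLin

lemma mem_core {δ : Matrix m m K} {T : Submodule K (m → K)} {x : m → K} :
    x ∈ core δ T ↔ x ∈ T ∧ δ *ᵥ x ∈ T :=
  Iff.rfl

end Core

section ChainProjection

/-- The endomorphism `1 - (hδ + δh)`, which for `δ² = 0` is a chain map homotopic to the identity
through the homotopy `h`. -/
def chainProj {R : Type*} [Ring R] (δ h : R) : R :=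
  1 - h * δ - δ * h

lemma chainProj_mul_comm {R : Type*} [Ring R] {δ : R} (hδ : δ * δ = 0) (h : R) :
    chainProj δ h * δ = δ * chainProj δ h := by
  have hδδ : h * δ * δ = 0 := by rw [mul_assoc, hδ, mul_zero]
  have δδh : δ * (δ * h) = 0 := by rw [← mul_assoc, hδ, zero_mul]
  simp only [chainProj, sub_mul, mul_sub, one_mul, mul_one, hδδ, δδh, mul_assoc, sub_zero]

variable {K m n : Type*} [Field K] [Fintype m] [Fintype n] [DecidableEq m]

lemma chainProj_transpose (δ h : Matrix m m K) : (chainProj δ h)ᵀ = chainProj δᵀ hᵀ := by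
  simp only [chainProj, transpose_sub, transpose_mul, transpose_one]
  abel

lemma chainProj_mul {δ : Matrix m m K} {d : Matrix n n K} {ψ : Matrix m n K}
    (hψ : δ * ψ = ψ * d) (h : Matrix m m K) :
    chainProj δ h * ψ = ψ - (δ * (h * ψ) + h * ψ * d) := by
  simp only [chainProj, Matrix.sub_mul, Matrix.one_mul, Matrix.mul_assoc, hψ]
  abel

lemma mul_chainProj {δ : Matrix n n K} {d : Matrix m m K} {ψ : Matrix n m K}
    (hψ : δ * ψ = ψ * d) (h : Matrix m m K) :
    ψ * chainProj d h = ψ - (δ * (ψ * h) + ψ * h * d) := by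
  simp only [chainProj, Matrix.mul_sub, Matrix.mul_one, ← Matrix.mul_assoc, hψ]
  abel

lemma exists_partial_homotopy {V : Type*} [AddCommGroup V] [Module K V] {f : V →ₗ[K] V}
    {E : Submodule K V} (hE : Disjoint E (E.comap f)) :
    ∃ h : V →ₗ[K] V, (∀ x, h x ∈ E) ∧ (∀ x ∈ E, h x = 0) ∧ ∀ x ∈ E, h (f x) = x := by
  have hker : LinearMap.ker (E.mkQ ∘ₗ f ∘ₗ E.subtype) = ⊥ := by
    rw [LinearMap.ker_eq_bot']
    intro x hx
    have hfx : f x ∈ E := by simpa using hx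
    exact Subtype.ext (Submodule.disjoint_def.1 hE x x.2 hfx)
  obtain ⟨k, hk⟩ := LinearMap.exists_leftInverse_of_injective _ hker
  refine ⟨E.subtype ∘ₗ k ∘ₗ E.mkQ, fun x ↦ (k _).2, fun x hx ↦ ?_, fun x hx ↦ ?_⟩
  · simp [(Submodule.Quotient.mk_eq_zero E).2 hx]
  · exact congrArg Subtype.val (LinearMap.congr_fun hk ⟨x, hx⟩)

lemma exists_chainProj_mul_eraseCoords {δ : Matrix m m K} {I : Finset m}
    (hI : core δ (coordSubspace K I) = ⊥) :
    ∃ h : Matrix m m K, (∀ x, h *ᵥ x ∈ coordSubspace K I) ∧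
      chainProj δ h * eraseCoords K I = chainProj δ h := by
  obtain ⟨h, h_mem, h_zero, h_inv⟩ := exists_partial_homotopy (disjoint_iff.2 hI)
  refine ⟨LinearMap.toMatrix' h, fun x ↦ ?_, mul_eraseCoords_eq_self fun x hx ↦ ?_⟩
  · rw [LinearMap.toMatrix'_mulVec]
    exact h_mem x
  · have h_inv' : h (δ *ᵥ x) = x := h_inv x hx
    simp only [chainProj, sub_mulVec, one_mulVec, ← mulVec_mulVec, LinearMap.toMatrix'_mulVec,
      h_inv', h_zero x hx, mulVec_zero, sub_self]

/- Replacing `ψ` by `q₁ ψ q₂ᵀ`, with `qᵢ` the chain projections killing the vectors supported on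
`I` and on `J`, changes it by a boundary and leaves only its entries outside `I` and `J`. -/
theorem exists_eq_boundary_of_erase_eq_zero [DecidableEq n] {δ₁ : Matrix m m K} {δ₂ : Matrix n n K}
    {ψ : Matrix m n K} {I : Finset m} {J : Finset n} (hδ₁ : δ₁ * δ₁ = 0)
    (hI : core δ₁ (coordSubspace K I) = ⊥) (hJ : core δ₂ (coordSubspace K J) = ⊥)
    (hψ : δ₁ * ψ = ψ * δ₂ᵀ) (hzero : eraseCoords K I * ψ * eraseCoords K J = 0) :
    ∃ φ : Matrix m n K, ψ = δ₁ * φ + φ * δ₂ᵀ := by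
  obtain ⟨a, -, ha⟩ := exists_chainProj_mul_eraseCoords hI
  obtain ⟨b, -, hb⟩ := exists_chainProj_mul_eraseCoords hJ
  have hb' : eraseCoords K J * chainProj δ₂ᵀ bᵀ = chainProj δ₂ᵀ bᵀ := by
    rw [← chainProj_transpose, ← eraseCoords_transpose, ← transpose_mul, hb]
  set χ := chainProj δ₁ a * ψ with hχ
  have hχ_comm : δ₁ * χ = χ * δ₂ᵀ := by
    rw [hχ, ← Matrix.mul_assoc, ← chainProj_mul_comm hδ₁, Matrix.mul_assoc, hψ, Matrix.mul_assoc]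
  have hχ_proj : χ * chainProj δ₂ᵀ bᵀ = 0 := by
    calc χ * chainProj δ₂ᵀ bᵀ
        = chainProj δ₁ a * (eraseCoords K I * ψ * eraseCoords K J) * chainProj δ₂ᵀ bᵀ := by
          conv_lhs => rw [hχ, ← ha, ← hb']
          simp only [Matrix.mul_assoc]
      _ = 0 := by rw [hzero, Matrix.mul_zero, Matrix.zero_mul]
  have hψχ : ψ = χ + (δ₁ * (a * ψ) + a * ψ * δ₂ᵀ) := by
    rw [hχ, chainProj_mul hψ, sub_add_cancel]
  have hχ_boundary : χ = δ₁ * (χ * bᵀ) + χ * bᵀ * δ₂ᵀ := by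
    rwa [mul_chainProj hχ_comm, sub_eq_zero] at hχ_proj
  refine ⟨χ * bᵀ + a * ψ, ?_⟩
  calc ψ = δ₁ * (χ * bᵀ) + χ * bᵀ * δ₂ᵀ + (δ₁ * (a * ψ) + a * ψ * δ₂ᵀ) := by
        rwa [← hχ_boundary]
    _ = δ₁ * (χ * bᵀ + a * ψ) + (χ * bᵀ + a * ψ) * δ₂ᵀ := by
        rw [Matrix.mul_add, Matrix.add_mul]
        abel

lemma finrank_map_add_finrank_inf_ker {V W : Type*} [AddCommGroup V] [Module K V]
    [AddCommGroup W] [Module K W] (f : V →ₗ[K] W) (p : Submodule K V) [FiniteDimensional K p] :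
    finrank K (p.map f) + finrank K ↥(p ⊓ LinearMap.ker f) = finrank K p := by
  rw [← LinearMap.finrank_range_add_finrank_ker (f.domRestrict p), LinearMap.range_domRestrict,
    LinearMap.ker_domRestrict, ← Submodule.finrank_map_subtype_eq, Submodule.map_comap_subtype]

/- On `V ∩ ker q` with `q = 1 - aδ - δa`, the map `v ↦ av` is injective: `av = 0` forces
`v = aδv`, which lies in `V ∩ E`. Its values lie in the core, as `δav = v - aδv`. -/
lemma finrank_inf_ker_chainProj_le {δ a : Matrix m m K} {V E : Submodule K (m → K)}
    (hVE : Disjoint V E) (ha : ∀ x, a *ᵥ x ∈ E) :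
    finrank K ↥(V ⊓ LinearMap.ker (chainProj δ a).mulVecLin) ≤ finrank K (core δ (V ⊔ E)) := by
  set N := V ⊓ LinearMap.ker (chainProj δ a).mulVecLin
  have hδa : ∀ v ∈ N, δ *ᵥ (a *ᵥ v) = v - a *ᵥ (δ *ᵥ v) := by
    intro v hv
    have hqv : chainProj δ a *ᵥ v = 0 := hv.2
    simp only [chainProj, sub_mulVec, one_mulVec, ← mulVec_mulVec] at hqv
    exact (sub_eq_zero.1 hqv).symm
  have a_mem_core : ∀ v ∈ N, a *ᵥ v ∈ core δ (V ⊔ E) := fun v hv ↦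
    mem_core.2 ⟨Submodule.mem_sup_right (ha v), by
      rw [hδa v hv]
      exact sub_mem (Submodule.mem_sup_left hv.1) (Submodule.mem_sup_right (ha _))⟩
  refine LinearMap.finrank_le_finrank_of_injective (f := a.mulVecLin.restrict a_mem_core) ?_
  rw [injective_iff_map_eq_zero]
  rintro ⟨v, hv⟩ hav
  have hav' : a *ᵥ v = 0 := congrArg Subtype.val hav
  have hv_eq : v = a *ᵥ (δ *ᵥ v) := by
    simpa [hav', eq_comm, sub_eq_zero] using hδa v hv
  have hvE : v ∈ E := hv_eq ▸ ha _
  exact Subtype.ext (Submodule.disjoint_def.1 hVE v hv.1 hvE)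

variable [DecidableEq n]

lemma transpose_mul_mulVec_mem {ψ : Matrix m n K} {I : Finset m} {J : Finset n}
    {q : Matrix m m K} (hq : q * eraseCoords K I = q) (x : m → K) :
    (q * ψ)ᵀ *ᵥ x ∈ LinearMap.range (eraseCoords K I * ψ * eraseCoords K J)ᵀ.mulVecLin ⊔
      coordSubspace K J := by
  have h_erase : (eraseCoords K I * ψ * eraseCoords K J)ᵀ *ᵥ (qᵀ *ᵥ x) =
      eraseCoords K J *ᵥ ((q * ψ)ᵀ *ᵥ x) := by
    rw [mulVec_mulVec, ← transpose_mul, ← Matrix.mul_assoc, ← Matrix.mul_assoc, hq,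
      transpose_mul, eraseCoords_transpose, mulVec_mulVec]
  rw [← add_sub_cancel (eraseCoords K J *ᵥ ((q * ψ)ᵀ *ᵥ x)) ((q * ψ)ᵀ *ᵥ x), ← h_erase]
  exact Submodule.add_mem_sup ⟨_, rfl⟩ (h_erase ▸ sub_eraseCoords_mulVec_mem _ _)

lemma rank_chainProj_mul_le {δ₁ a : Matrix m m K} {δ₂ : Matrix n n K} {ψ : Matrix m n K}
    {I : Finset m} {J : Finset n} (hδ₁ : δ₁ * δ₁ = 0) (hψ : δ₁ * ψ = ψ * δ₂ᵀ)
    (ha : chainProj δ₁ a * eraseCoords K I = chainProj δ₁ a) :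
    (chainProj δ₁ a * ψ).rank ≤ finrank K (core δ₂
      (LinearMap.range (eraseCoords K I * ψ * eraseCoords K J)ᵀ.mulVecLin ⊔
        coordSubspace K J)) := by
  rw [← rank_transpose]
  refine Submodule.finrank_mono ?_
  rintro _ ⟨x, rfl⟩
  have hδ₂ : δ₂ *ᵥ ((chainProj δ₁ a * ψ)ᵀ *ᵥ x) = (δ₁ * chainProj δ₁ a * ψ)ᵀ *ᵥ x := by
    rw [← chainProj_mul_comm hδ₁, Matrix.mul_assoc, hψ, ← Matrix.mul_assoc,
      transpose_mul _ δ₂ᵀ, transpose_transpose, mulVec_mulVec]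
  have hδ₁q : δ₁ * chainProj δ₁ a * eraseCoords K I = δ₁ * chainProj δ₁ a := by
    rw [Matrix.mul_assoc, ha]
  exact mem_core.2 ⟨transpose_mul_mulVec_mem ha x,
    (congrArg (· ∈ _) hδ₂).mpr (transpose_mul_mulVec_mem hδ₁q x)⟩

theorem rank_erase_le_finrank_core_add {δ₁ : Matrix m m K} {δ₂ : Matrix n n K} {ψ θ : Matrix m n K}
    {I : Finset m} {J : Finset n} (hδ₁ : δ₁ * δ₁ = 0) (hI : core δ₁ (coordSubspace K I) = ⊥)
    (hψ : δ₁ * ψ = ψ * δ₂ᵀ) (hθ : θ = eraseCoords K I * ψ * eraseCoords K J) :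
    θ.rank ≤ finrank K (core δ₁ (LinearMap.range θ.mulVecLin ⊔ coordSubspace K I)) +
      finrank K (core δ₂ (LinearMap.range θᵀ.mulVecLin ⊔ coordSubspace K J)) := by
  obtain ⟨a, ha_mem, ha⟩ := exists_chainProj_mul_eraseCoords hI
  set q := chainProj δ₁ a
  set V := LinearMap.range θ.mulVecLin with hV
  have hVI : Disjoint V (coordSubspace K I) := disjoint_range_coordSubspace <| by
    rw [hθ, ← Matrix.mul_assoc, ← Matrix.mul_assoc, eraseCoords_mul_self]
  have hqθ : q * θ = q * ψ * eraseCoords K J := by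
    rw [hθ, ← Matrix.mul_assoc, ← Matrix.mul_assoc, ha]
  have h_map : finrank K (V.map q.mulVecLin) = (q * θ).rank := by
    rw [hV, ← LinearMap.range_comp, ← mulVecLin_mul, rank]
  calc θ.rank
      = (q * θ).rank + finrank K ↥(V ⊓ LinearMap.ker q.mulVecLin) := by
        rw [← h_map, finrank_map_add_finrank_inf_ker, rank]
    _ ≤ (q * ψ).rank + finrank K ↥(V ⊓ LinearMap.ker q.mulVecLin) := by
        rw [hqθ]
        gcongr
        exact rank_mul_le_left _ _
    _ ≤ _ := by
        rw [add_comm]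
        exact add_le_add (finrank_inf_ker_chainProj_le hVI ha_mem)
          (hθ ▸ rank_chainProj_mul_le hδ₁ hψ ha)

end ChainProjection

section LinearlyIndependentFamilies

variable {K V W m ι : Type*} [Field K] [AddCommGroup V] [Module K V] [AddCommGroup W] [Module K W]

lemma linearIndependent_add_section {f : V →ₗ[K] W} {s : LinearMap.range f →ₗ[K] V}
    (hs : ∀ y, f (s y) = y) {z : ι → V} (hz : LinearIndependent K z) (hfz : ∀ i, f (z i) = 0)
    (y : ι → LinearMap.range f) : LinearIndependent K fun i ↦ z i + s (y i) := by
  set π : V →ₗ[K] V := LinearMap.id - s ∘ₗ f.rangeRestrict with hπ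
  have h_retract : π ∘ (fun i ↦ z i + s (y i)) = z := by
    funext i
    have hy : f.rangeRestrict (z i + s (y i)) = y i :=
      Subtype.ext (by simp [hfz, hs])
    simp [-map_add, hπ, hy]
  refine LinearIndependent.of_comp π ?_
  rwa [h_retract]

variable [Fintype m] [DecidableEq m]

lemma exists_units_mulVec_eq {z z' : ι → m → K} (hz : LinearIndependent K z)
    (hz' : LinearIndependent K z') :
    ∃ g : (Matrix m m K)ˣ, ∀ i, (g : Matrix m m K) *ᵥ z i = z' i := by
  obtain ⟨g, hg⟩ := Submodule.exists_linearEquiv_restrict_eq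
    ((Basis.span hz).equiv (Basis.span hz') (Equiv.refl _))
  refine ⟨⟨LinearMap.toMatrix' g.toLinearMap, LinearMap.toMatrix' g.symm.toLinearMap,
    by simp [← LinearMap.toMatrix'_comp], by simp [← LinearMap.toMatrix'_comp]⟩, fun i ↦ ?_⟩
  have h := hg (Basis.span hz i)
  rw [Basis.equiv_apply, Basis.span_apply, Equiv.refl_apply, Basis.span_apply] at h
  rw [LinearMap.toMatrix'_mulVec]
  exact h.symm

variable (K m ι) in
open Classical in
/-- The set of linearly independent families of vectors indexed by `ι`. -/
noncomputable def linIndepFamilies [Fintype K] [Fintype ι] : Finset (ι → m → K) :=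
  {z | LinearIndependent K z}

/- If `s` is a linear section of `δ` onto its range, then `(z, y) ↦ z + s y` injects the pairs of an
independent family `z` in the kernel and a family `y` in the range into the independent families. -/
lemma unifProb_linIndepFamilies_mulVec_eq_zero_le [Fintype K] [Fintype ι] (δ : Matrix m m K) :
    unifProb (linIndepFamilies K m ι) (fun z ↦ ∀ i, δ *ᵥ z i = 0) ≤
      ((Fintype.card K : ℝ) ^ (δ.rank * Fintype.card ι))⁻¹ := by
  classical
  obtain ⟨s, hs⟩ := δ.mulVecLin.rangeRestrict.exists_rightInverse_of_surjective
    δ.mulVecLin.range_rangeRestrict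
  have hδs (y : LinearMap.range δ.mulVecLin) : δ *ᵥ s y = y :=
    congrArg Subtype.val (LinearMap.congr_fun hs y)
  set Z : Finset (ι → m → K) := {z ∈ linIndepFamilies K m ι | ∀ i, δ *ᵥ z i = 0} with hZ
  have mem_Z {z : ι → m → K} : z ∈ Z ↔ LinearIndependent K z ∧ ∀ i, δ *ᵥ z i = 0 := by
    simp [hZ, linIndepFamilies]
  have h_card : #(Z ×ˢ (univ : Finset (ι → LinearMap.range δ.mulVecLin))) ≤
      #(linIndepFamilies K m ι) := by
    refine card_le_card_of_injOn (fun p i ↦ p.1 i + s (p.2 i)) (fun p hp ↦ ?_) ?_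
    · obtain ⟨hp_indep, hp_ker⟩ := mem_Z.1 (mem_product.1 hp).1
      exact mem_filter.2 ⟨mem_univ _, linearIndependent_add_section hδs hp_indep hp_ker p.2⟩
    · rintro ⟨z, y⟩ hp ⟨z', y'⟩ hp' h
      have hz := (mem_Z.1 (mem_product.1 hp).1).2
      have hz' := (mem_Z.1 (mem_product.1 hp').1).2
      have hyy' : y = y' := funext fun i ↦ Subtype.ext <| by
        simpa [mulVec_add, hz, hz', hδs] using congrArg (δ *ᵥ ·) (congrFun h i)
      subst hyy'
      exact Prod.ext (funext fun i ↦ add_right_cancel (congrFun h i)) rfl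
  rw [card_product, card_univ, Fintype.card_fun, Module.card_eq_pow_finrank (K := K), ← pow_mul,
    ← rank] at h_card
  refine div_le_of_le_mul₀ (by positivity) (by positivity) ?_
  rw [inv_mul_eq_div, le_div_iff₀ (by positivity)]
  exact_mod_cast h_card

end LinearlyIndependentFamilies

section ConjInvariantEnsembles

variable {K m n ι : Type*} [Field K] [Fintype m] [DecidableEq m]

/-- A conjugation-invariant set of boundary operators of rank `L`. -/
structure IsConjInvariantEnsemble (B : Finset (Matrix m m K)) (L : ℕ) : Prop where
  mul_self : ∀ δ ∈ B, δ * δ = 0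
  rank_eq : ∀ δ ∈ B, δ.rank = L
  conj_mem : ∀ δ ∈ B, ∀ g : (Matrix m m K)ˣ, (g : Matrix m m K) * δ * (g⁻¹ : (Matrix m m K)ˣ) ∈ B

namespace IsConjInvariantEnsemble

variable {B : Finset (Matrix m m K)} {L d : ℕ}

lemma unifProb_mulVec_eq_zero_congr (hB : IsConjInvariantEnsemble B L) {z z' : ι → m → K}
    (hz : LinearIndependent K z) (hz' : LinearIndependent K z') :
    unifProb B (fun δ ↦ ∀ i, δ *ᵥ z i = 0) = unifProb B (fun δ ↦ ∀ i, δ *ᵥ z' i = 0) := by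
  obtain ⟨g, hg⟩ := exists_units_mulVec_eq hz hz'
  let conj : Matrix m m K ≃ Matrix m m K := (Units.mulRight g⁻¹).trans (Units.mulLeft g)
  have h_mem (δ : Matrix m m K) : δ ∈ B ↔ conj δ ∈ B := by
    refine ⟨fun h ↦ ?_, fun h ↦ ?_⟩
    · simpa [conj, Matrix.mul_assoc] using hB.conj_mem δ h g
    · simpa [conj, Matrix.mul_assoc] using hB.conj_mem _ h g⁻¹
  rw [← unifProb_comp_equiv conj h_mem fun δ ↦ ∀ i, δ *ᵥ z' i = 0]
  refine congrArg (unifProb B) (funext fun δ ↦ propext (forall_congr' fun i ↦ ?_))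
  have h_conj : conj δ *ᵥ z' i = (g : Matrix m m K) *ᵥ (δ *ᵥ z i) := by
    simp [conj, ← hg, mulVec_mulVec, Matrix.mul_assoc]
  rw [h_conj, (mulVec_injective_of_isUnit g.isUnit).eq_iff' (mulVec_zero _)]

variable [Fintype K]

lemma unifProb_mulVec_eq_zero_le [Fintype ι] (hB : IsConjInvariantEnsemble B L) {z : ι → m → K}
    (hz : LinearIndependent K z) :
    unifProb B (fun δ ↦ ∀ i, δ *ᵥ z i = 0) ≤
      ((Fintype.card K : ℝ) ^ (L * Fintype.card ι))⁻¹ := by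
  refine unifProb_le_of_minimal (A := B) (B := linIndepFamilies K m ι) (b₀ := z)
    (P := fun δ z ↦ ∀ i, δ *ᵥ z i = 0) (by positivity) (by simpa [linIndepFamilies] using hz)
    (fun z' hz' ↦ ?_) fun δ hδ ↦ ?_
  · exact (hB.unifProb_mulVec_eq_zero_congr hz (by simpa [linIndepFamilies] using hz')).le
  · rw [← hB.rank_eq δ hδ]
    exact unifProb_linIndepFamilies_mulVec_eq_zero_le δ

lemma unifProb_forall_mem_mulVec_eq_zero_le (hB : IsConjInvariantEnsemble B L)
    {Z : Submodule K (m → K)} (hd : d ≤ finrank K Z) :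
    unifProb B (fun δ ↦ ∀ z ∈ Z, δ *ᵥ z = 0) ≤ ((Fintype.card K : ℝ) ^ (L * d))⁻¹ := by
  obtain ⟨z, hz⟩ := exists_linearIndependent_of_le_finrank hd
  have h := hB.unifProb_mulVec_eq_zero_le (hz.map' Z.subtype Z.ker_subtype)
  rw [Fintype.card_fin] at h
  exact (unifProb_mono fun δ _ hδ i ↦ hδ _ (z i).2).trans h

/- If `δ * A = C` with `δ² = 0`, then `δ` kills both the range of `C` and the image under `A` of the
kernel of `C`; their dimensions add up to at least `A.rank`. -/
lemma unifProb_mul_eq_le [Fintype n] (hB : IsConjInvariantEnsemble B L) {A C : Matrix m n K}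
    (hd : 2 * d ≤ A.rank + 1) :
    unifProb B (fun δ ↦ δ * A = C) ≤ ((Fintype.card K : ℝ) ^ (L * d))⁻¹ := by
  set N := LinearMap.ker C.mulVecLin
  have h_ranks : A.rank ≤ C.rank + finrank K (N.map A.mulVecLin) := by
    have hA : A.rank + finrank K (LinearMap.ker A.mulVecLin) = finrank K (n → K) :=
      A.mulVecLin.finrank_range_add_finrank_ker
    have hC : C.rank + finrank K N = finrank K (n → K) := C.mulVecLin.finrank_range_add_finrank_ker
    have hN := finrank_map_add_finrank_inf_ker A.mulVecLin N
    have h_inf : finrank K ↥(N ⊓ LinearMap.ker A.mulVecLin) ≤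
        finrank K (LinearMap.ker A.mulVecLin) := Submodule.finrank_mono inf_le_right
    omega
  rcases le_or_gt d C.rank with h | h
  · refine le_trans (unifProb_mono fun δ hδ hδA ↦ ?_) (hB.unifProb_forall_mem_mulVec_eq_zero_le h)
    rintro _ ⟨x, rfl⟩
    rw [mulVecLin_apply, mulVec_mulVec, ← hδA, ← Matrix.mul_assoc, hB.mul_self δ hδ,
      Matrix.zero_mul, zero_mulVec]
  · refine le_trans (unifProb_mono fun δ _ hδA ↦ ?_)
      (hB.unifProb_forall_mem_mulVec_eq_zero_le (Z := N.map A.mulVecLin) (by omega))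
    rintro _ ⟨x, hx, rfl⟩
    rw [mulVecLin_apply, mulVec_mulVec, hδA]
    exact hx

lemma unifProb_le_finrank_core_le (hB : IsConjInvariantEnsemble B L) (T : Submodule K (m → K))
    {k : ℕ} (hd : 2 * d ≤ k + 1) :
    unifProb B (fun δ ↦ k ≤ finrank K (core δ T)) ≤
      (Fintype.card K : ℝ) ^ (2 * finrank K T * k) * ((Fintype.card K : ℝ) ^ (L * d))⁻¹ := by
  classical
  let pairs : Finset ((Fin k → T) × (Fin k → T)) :=
    {p | LinearIndependent K fun i ↦ (p.1 i : m → K)}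
  let colMatrix (x : Fin k → T) : Matrix m (Fin k) K := (of fun i ↦ (x i : m → K))ᵀ
  have h_cover : ∀ δ ∈ B, k ≤ finrank K (core δ T) →
      ∃ p ∈ pairs, δ * colMatrix p.1 = colMatrix p.2 := by
    intro δ _ hk
    obtain ⟨x, hx⟩ := exists_linearIndependent_of_le_finrank hk
    refine ⟨(fun i ↦ ⟨x i, (x i).2.1⟩, fun i ↦ ⟨δ *ᵥ x i, (x i).2.2⟩),
      mem_filter.2 ⟨mem_univ _, hx.map' _ (Submodule.ker_subtype _)⟩, ?_⟩
    rfl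
  have h_pair : ∀ p ∈ pairs, unifProb B (fun δ ↦ δ * colMatrix p.1 = colMatrix p.2) ≤
      ((Fintype.card K : ℝ) ^ (L * d))⁻¹ := by
    intro p hp
    have h_indep : LinearIndependent K fun i ↦ (p.1 i : m → K) := (mem_filter.1 hp).2
    have h_rank : (colMatrix p.1).rank = k := by
      rw [rank_transpose]
      exact h_indep.rank_matrix.trans (Fintype.card_fin k)
    exact hB.unifProb_mul_eq_le (by rwa [h_rank])
  have h_card : #pairs ≤ Fintype.card K ^ (2 * finrank K T * k) := by
    calc #pairs ≤ Fintype.card ((Fin k → T) × (Fin k → T)) := card_le_univ _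
      _ = _ := by
        rw [Fintype.card_prod, Fintype.card_fun, Fintype.card_fin,
          Module.card_eq_pow_finrank (K := K) (V := T), ← pow_mul, ← pow_add]
        ring_nf
  refine (unifProb_mono h_cover).trans ((unifProb_exists_le pairs _ h_pair).trans ?_)
  gcongr
  exact mod_cast h_card

end IsConjInvariantEnsemble

end ConjInvariantEnsembles

section LightSets

variable {K m : Type*} [Fintype m]

/-- A set of coordinates is light if it contains at most a fraction `2⁻¹⁷` of them. -/
def IsLightSet (I : Finset m) : Prop :=
  2 ^ 17 * #I ≤ Fintype.card m

/-- A vector is light if its support is a light set. -/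
def IsLight [Zero K] [DecidableEq K] (v : m → K) : Prop :=
  IsLightSet ({i | v i ≠ 0} : Finset m)

lemma IsLightSet.mono {I J : Finset m} (hJ : IsLightSet J) (hIJ : I ⊆ J) : IsLightSet I :=
  (Nat.mul_le_mul_left _ (card_le_card hIJ)).trans hJ

lemma isLight_zero [Zero K] [DecidableEq K] : IsLight (0 : m → K) := by
  simp [IsLight, IsLightSet]

lemma card_filter_card_le_mul_pow_le (w : ℕ) {x : ℝ} (hx₀ : 0 ≤ x) (hx₁ : x ≤ 1) :
    (#{I : Finset m | #I ≤ w} : ℝ) * x ^ w ≤ (1 + x) ^ Fintype.card m := by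
  calc (#{I : Finset m | #I ≤ w} : ℝ) * x ^ w
      ≤ ∑ I : Finset m with #I ≤ w, x ^ #I := by
        rw [← nsmul_eq_mul]
        refine card_nsmul_le_sum _ _ _ fun I hI ↦ ?_
        exact pow_le_pow_of_le_one hx₀ hx₁ (mem_filter.1 hI).2
    _ ≤ ∑ I : Finset m, x ^ #I :=
        sum_le_sum_of_subset_of_nonneg (subset_univ _) fun _ _ _ ↦ by positivity
    _ = (1 + x) ^ Fintype.card m := by
        simpa [add_comm] using Fintype.sum_pow_mul_eq_add_pow m x 1

/- Chernoff bound with parameter `x = 2⁻¹⁴`, for which `1 + x ≤ exp (log 2 / 8192)`. -/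
open Classical in
lemma card_isLightSet_le :
    (#{I : Finset m | IsLightSet I} : ℝ) ≤ 2 ^ ((Fintype.card m : ℝ) / 4096) := by
  set n := Fintype.card m
  set w := n / 2 ^ 17 with hw
  have h_light : ({I | IsLightSet I} : Finset (Finset m)) = ({I | #I ≤ w} : Finset _) :=
    filter_congr fun I _ ↦ by
      rw [IsLightSet, hw, Nat.le_div_iff_mul_le (by positivity), mul_comm]
  have h_chernoff := card_filter_card_le_mul_pow_le (m := m) w (x := (2 ^ 14)⁻¹) (by norm_num)
    (by norm_num)
  have h_one_add : (1 + (2 ^ 14)⁻¹ : ℝ) ≤ 2 ^ (1 / 8192 : ℝ) := by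
    rw [Real.rpow_def_of_pos two_pos]
    refine le_trans ?_ (Real.add_one_le_exp _)
    linarith [Real.log_two_gt_d9]
  have h_exponent : (14 : ℝ) * w ≤ n / 8192 := by
    have hwn : 2 ^ 17 * w ≤ n := Nat.mul_div_le n _
    have hwn' : (2 : ℝ) ^ 17 * w ≤ n := mod_cast hwn
    linarith
  calc (#{I : Finset m | IsLightSet I} : ℝ)
      ≤ (1 + (2 ^ 14)⁻¹) ^ n * (2 ^ 14) ^ w := by
        rw [h_light]
        rwa [inv_pow, ← div_eq_mul_inv, div_le_iff₀ (by positivity)] at h_chernoff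
    _ ≤ (2 ^ (1 / 8192 : ℝ)) ^ n * (2 ^ 14) ^ w := by gcongr
    _ = 2 ^ (n / 8192 + 14 * w : ℝ) := by
        rw [Real.rpow_add two_pos, ← Real.rpow_mul_natCast two_pos.le, ← pow_mul,
          ← Real.rpow_natCast 2 (14 * w)]
        push_cast
        ring_nf
    _ ≤ 2 ^ (n / 4096 : ℝ) := by
        gcongr
        · norm_num
        · linarith

open Classical in
lemma card_isLight_le [DecidableEq m] :
    (#{v : m → ZMod 2 | IsLight v} : ℝ) ≤ 2 ^ ((Fintype.card m : ℝ) / 4096) := by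
  refine le_trans (mod_cast card_le_card_of_injOn
    (fun v ↦ ({i | v i ≠ 0} : Finset m)) (fun v hv ↦ ?_) ?_) card_isLightSet_le
  · simpa [IsLight] using hv
  · intro v _ v' _ h
    funext i
    have hi : v i ≠ 0 ↔ v' i ≠ 0 := by simpa using Finset.ext_iff.1 h i
    generalize v i = a at hi
    generalize v' i = b at hi
    revert a b
    decide

end LightSets

section BadEvents

variable {K m : Type*} [Field K] [DecidableEq K] [Fintype m]

/-- For some light set `I` and light vectors `v₁, …, v_R`, the core of the subspace generated by
the `vᵢ` and the vectors supported on `I` has dimension at least `R / 2`. -/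
def HasLargeCore (δ : Matrix m m K) (R : ℕ) : Prop :=
  ∃ (I : Finset m) (v : Fin R → m → K), IsLightSet I ∧ (∀ i, IsLight (v i)) ∧
    R ≤ 2 * finrank K (core δ (Submodule.span K (Set.range v) ⊔ coordSubspace K I))

/-- The first bad event: `δ` has a large core for some number of light vectors between `1` and
`M / 256`, where `M` is the size of `δ`. -/
def IsDegenerate (δ : Matrix m m K) : Prop :=
  ∃ R ∈ Icc 1 (Fintype.card m / 256), HasLargeCore δ R

/-- The second bad event: the product of `δ₁` and `δ₂` has a light cycle of rank at least
`M / 256`, where `M` is the size of `δ₁` and `δ₂`. -/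
def HasHighRankLightCycle (δ₁ δ₂ : Matrix m m K) : Prop :=
  ∃ ψ : Matrix m m K, IsLight ψ.vec ∧ Fintype.card m ≤ 256 * ψ.rank ∧ δ₁ * ψ = ψ * δ₂ᵀ

namespace IsConjInvariantEnsemble

variable [DecidableEq m] {L d : ℕ}

open Classical in
lemma unifProb_hasLargeCore_le_card_mul [Fintype K] {B : Finset (Matrix m m K)}
    (hB : IsConjInvariantEnsemble B L) {R k : ℕ} (hk : 2 * k ≤ R + 1) (hd : 2 * d ≤ k + 1) :
    unifProb B (HasLargeCore · R) ≤
      (#{I : Finset m | IsLightSet I} * #{v : m → K | IsLight v} ^ R : ℝ) *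
        ((Fintype.card K : ℝ) ^ (2 * (R + Fintype.card m / 2 ^ 17) * k) *
          ((Fintype.card K : ℝ) ^ (L * d))⁻¹) := by
  set S := ({I | IsLightSet I} : Finset (Finset m)) ×ˢ
    Fintype.piFinset fun _ : Fin R ↦ ({v | IsLight v} : Finset (m → K))
  let T (p : Finset m × (Fin R → m → K)) := Submodule.span K (Set.range p.2) ⊔ coordSubspace K p.1
  have h_cover : ∀ δ ∈ B, HasLargeCore δ R → ∃ p ∈ S, k ≤ finrank K (core δ (T p)) := by
    rintro δ - ⟨I, v, hI, hv, hR⟩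
    exact ⟨(I, v), by simp [S, hI, hv], by dsimp only [T]; omega⟩
  have h_each : ∀ p ∈ S, unifProb B (fun δ ↦ k ≤ finrank K (core δ (T p))) ≤
      (Fintype.card K : ℝ) ^ (2 * (R + Fintype.card m / 2 ^ 17) * k) *
        ((Fintype.card K : ℝ) ^ (L * d))⁻¹ := by
    intro p hp
    have hI : IsLightSet p.1 := (mem_filter.1 (mem_product.1 hp).1).2
    have h_card : #p.1 ≤ Fintype.card m / 2 ^ 17 :=
      (Nat.le_div_iff_mul_le (by positivity)).2 ((mul_comm _ _).trans_le hI)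
    have h_finrank : finrank K (T p) ≤ R + Fintype.card m / 2 ^ 17 :=
      (finrank_span_sup_coordSubspace_le p.2 p.1).trans (Nat.add_le_add_left h_card R)
    refine (hB.unifProb_le_finrank_core_le (T p) hd).trans ?_
    gcongr
    exact mod_cast Fintype.card_pos
  refine (unifProb_mono h_cover).trans ((unifProb_exists_le S _ h_each).trans_eq ?_)
  rw [card_product, Fintype.card_piFinset_const]
  push_cast
  rfl

open Classical in
lemma unifProb_hasHighRankLightCycle_le_card_mul [Fintype K] {B : Finset (Matrix m m K)}
    (hB : IsConjInvariantEnsemble B L) (hd : 512 * d ≤ Fintype.card m + 511) (δ₁ : Matrix m m K) :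
    unifProb B (HasHighRankLightCycle δ₁) ≤
      #{v : m × m → K | IsLight v} * ((Fintype.card K : ℝ) ^ (L * d))⁻¹ := by
  set S : Finset (Matrix m m K) := {ψ | IsLight ψ.vec ∧ Fintype.card m ≤ 256 * ψ.rank}
  have h_cover : ∀ δ₂ ∈ B, HasHighRankLightCycle δ₁ δ₂ → ∃ ψ ∈ S, δ₂ * ψᵀ = ψᵀ * δ₁ᵀ := by
    rintro δ₂ - ⟨ψ, hψ_light, hψ_rank, hψ⟩
    refine ⟨ψ, by simp [S, hψ_light, hψ_rank], ?_⟩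
    rw [← transpose_mul, hψ, transpose_mul, transpose_transpose]
  have h_each : ∀ ψ ∈ S, unifProb B (fun δ₂ ↦ δ₂ * ψᵀ = ψᵀ * δ₁ᵀ) ≤
      ((Fintype.card K : ℝ) ^ (L * d))⁻¹ := by
    intro ψ hψ
    have hψ_rank : Fintype.card m ≤ 256 * ψ.rank := (mem_filter.1 hψ).2.2
    exact hB.unifProb_mul_eq_le (by rw [rank_transpose]; omega)
  have h_card : #S ≤ #{v : m × m → K | IsLight v} :=
    card_le_card_of_injOn vec (fun ψ hψ ↦ by simpa using (mem_filter.1 hψ).2.1)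
      vec_bijective.injective.injOn
  refine (unifProb_mono h_cover).trans ((unifProb_exists_le S _ h_each).trans ?_)
  gcongr

end IsConjInvariantEnsemble

end BadEvents

section ProbabilityBounds

/- The term `L * d ≥ M * R / 16` gained from the randomness of `δ` dominates the sum of the other
two terms, which is at most `M * R / 32`. -/
lemma hasLargeCore_exponent_le {M L R k d : ℕ} (hL : M ≤ 4 * L) (hR : 1 ≤ R) (hRM : 256 * R ≤ M)
    (hk : 2 * k ≤ R + 1) (hd : R ≤ 4 * d) :
    (M : ℝ) / 4096 * (R + 1 : ℕ) + ((2 * (R + M / 2 ^ 17) * k : ℕ) - (L * d : ℕ)) ≤ -M / 32 := by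
  have h_gain : (M : ℝ) * R ≤ (4 * L) * (4 * d) := mod_cast Nat.mul_le_mul hL hd
  have h_one : (M : ℝ) * 1 ≤ M * R := by gcongr; exact mod_cast hR
  have h_finrank : 128 * (R + M / 2 ^ 17) ≤ M := by omega
  generalize M / 2 ^ 17 = w at h_finrank ⊢
  have h_core : (128 * (R + w) * (2 * k) : ℝ) ≤ M * (2 * R) := by
    exact_mod_cast Nat.mul_le_mul h_finrank (show 2 * k ≤ 2 * R by omega)
  push_cast
  linarith

namespace IsConjInvariantEnsemble

variable {m : Type*} [Fintype m] [DecidableEq m] {B : Finset (Matrix m m (ZMod 2))} {L : ℕ}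

lemma unifProb_hasLargeCore_le (hB : IsConjInvariantEnsemble B L) (hL : Fintype.card m ≤ 4 * L)
    {R : ℕ} (hR : 1 ≤ R) (hRM : 256 * R ≤ Fintype.card m) :
    unifProb B (HasLargeCore · R) ≤ 2 ^ (-(Fintype.card m : ℝ) / 32) := by
  classical
  set M := Fintype.card m
  set k := (R + 1) / 2
  set d := (k + 1) / 2
  calc unifProb B (HasLargeCore · R)
      ≤ (#{I : Finset m | IsLightSet I} * #{v : m → ZMod 2 | IsLight v} ^ R : ℝ) *
          (2 ^ (2 * (R + M / 2 ^ 17) * k) * (2 ^ (L * d))⁻¹) := by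
        have h := hB.unifProb_hasLargeCore_le_card_mul (R := R) (k := k) (d := d) (by omega)
          (by omega)
        rwa [ZMod.card, Nat.cast_ofNat] at h
    _ ≤ (2 ^ (M / 4096 : ℝ) * (2 ^ (M / 4096 : ℝ)) ^ R : ℝ) *
          (2 ^ (2 * (R + M / 2 ^ 17) * k) * (2 ^ (L * d))⁻¹) := by
        gcongr
        · exact card_isLightSet_le
        · exact card_isLight_le
    _ = 2 ^ (M / 4096 * (R + 1 : ℕ) + ((2 * (R + M / 2 ^ 17) * k : ℕ) - (L * d : ℕ)) : ℝ) := by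
        rw [← pow_succ', Real.rpow_add two_pos, Real.rpow_sub two_pos,
          Real.rpow_mul_natCast two_pos.le, Real.rpow_natCast, Real.rpow_natCast, ← div_eq_mul_inv]
    _ ≤ 2 ^ (-(M : ℝ) / 32) := by
        gcongr
        · exact one_le_two
        · exact hasLargeCore_exponent_le hL hR hRM (by omega) (by omega)

lemma unifProb_isDegenerate_le (hB : IsConjInvariantEnsemble B L) (hL : Fintype.card m ≤ 4 * L) :
    unifProb B IsDegenerate ≤ Fintype.card m * 2 ^ (-(Fintype.card m : ℝ) / 32) := by
  refine (unifProb_exists_le (r := 2 ^ (-(Fintype.card m : ℝ) / 32)) _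
    (fun R δ ↦ HasLargeCore δ R) fun R hR ↦ ?_).trans ?_
  · rw [mem_Icc] at hR
    exact hB.unifProb_hasLargeCore_le hL hR.1 (by omega)
  · gcongr
    simpa using Nat.div_le_self _ _

lemma unifProb_hasHighRankLightCycle_le (hB : IsConjInvariantEnsemble B L)
    (hL : Fintype.card m ≤ 4 * L) (δ₁ : Matrix m m (ZMod 2)) :
    unifProb B (HasHighRankLightCycle δ₁) ≤ 2 ^ (-(Fintype.card m : ℝ) ^ 2 / 4096) := by
  classical
  set M := Fintype.card m
  set d := (M + 511) / 512
  have h_gain : (M : ℝ) * M ≤ (4 * L) * (512 * d) := by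
    exact_mod_cast Nat.mul_le_mul hL (show M ≤ 512 * d by omega)
  calc unifProb B (HasHighRankLightCycle δ₁)
      ≤ #{v : m × m → ZMod 2 | IsLight v} * (2 ^ (L * d))⁻¹ := by
        have h := hB.unifProb_hasHighRankLightCycle_le_card_mul (d := d) (by omega) δ₁
        rwa [ZMod.card, Nat.cast_ofNat] at h
    _ ≤ 2 ^ ((M * M : ℕ) / 4096 : ℝ) * (2 ^ (L * d))⁻¹ := by
        gcongr
        simpa [M] using card_isLight_le (m := m × m)
    _ = 2 ^ ((M * M : ℕ) / 4096 - (L * d : ℕ) : ℝ) := by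
        rw [Real.rpow_sub two_pos, Real.rpow_natCast, ← div_eq_mul_inv]
    _ ≤ 2 ^ (-(M : ℝ) ^ 2 / 4096) := by
        gcongr
        · exact one_le_two
        · push_cast
          linarith

end IsConjInvariantEnsemble

end ProbabilityBounds

section LightCycles

variable {K m n : Type*} [Field K] [DecidableEq K] [Fintype m] [Fintype n]

lemma hammingNorm_vec (ψ : Matrix m n K) : hammingNorm ψ.vec = ∑ i, hammingNorm (ψ i) := by
  simp only [hammingNorm, card_filter]
  rw [Fintype.sum_prod_type_right]
  rfl

lemma hammingNorm_vec_transpose (ψ : Matrix m n K) : hammingNorm ψᵀ.vec = hammingNorm ψ.vec :=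
  card_equiv (Equiv.prodComm m n) fun p ↦ by
    rw [mem_filter, mem_filter]
    simp [vec]

open Classical in
/-- The rows of `ψ` that are not light. -/
noncomputable def heavyRows (ψ : Matrix m n K) : Finset m :=
  {i | ¬ IsLight (ψ i)}

lemma mem_heavyRows {ψ : Matrix m n K} {i : m} : i ∈ heavyRows ψ ↔ ¬ IsLight (ψ i) := by
  simp [heavyRows]

/- Markov's inequality for the weight of a row. -/
lemma isLightSet_heavyRows [Nonempty n] {ψ : Matrix m n K}
    (hψ : 2 ^ 34 * hammingNorm ψ.vec ≤ Fintype.card m * Fintype.card n) :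
    IsLightSet (heavyRows ψ) := by
  have h_markov : #(heavyRows ψ) * Fintype.card n ≤ 2 ^ 17 * hammingNorm ψ.vec := by
    calc #(heavyRows ψ) * Fintype.card n
        ≤ ∑ i ∈ heavyRows ψ, 2 ^ 17 * hammingNorm (ψ i) :=
          card_nsmul_le_sum _ _ _ fun i hi ↦ (not_le.1 (mem_heavyRows.1 hi)).le
      _ ≤ ∑ i, 2 ^ 17 * hammingNorm (ψ i) := sum_le_sum_of_subset (subset_univ _)
      _ = 2 ^ 17 * hammingNorm ψ.vec := by rw [hammingNorm_vec, mul_sum]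
  refine Nat.le_of_mul_le_mul_right ?_ (Fintype.card_pos (α := n))
  linarith

lemma isLight_col_erase [DecidableEq m] [DecidableEq n] (ψ : Matrix m n K) (I : Finset m) (j : n) :
    IsLight ((eraseCoords K I * ψ * eraseCoords K (heavyRows ψᵀ)).col j) := by
  have h_entry (i : m) : (eraseCoords K I * ψ * eraseCoords K (heavyRows ψᵀ)).col j i =
      (if i ∈ I then 0 else ψ i j) * if j ∈ heavyRows ψᵀ then 0 else 1 := by
    simp [eraseCoords, mul_diagonal, diagonal_mul]
  by_cases hj : j ∈ heavyRows ψᵀ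
  · rw [if_pos hj] at h_entry
    convert isLight_zero (K := K) (m := m) using 1
    exact funext fun i ↦ (h_entry i).trans (mul_zero _)
  · have hj_light : IsLight (ψᵀ j) := not_not.1 (mem_heavyRows.not.1 hj)
    refine hj_light.mono fun i hi ↦ ?_
    rw [mem_filter, h_entry i] at hi
    refine mem_filter.2 ⟨mem_univ i, fun hψ ↦ hi.2 ?_⟩
    simp [show ψ i j = 0 from hψ]

variable {δ δ₁ δ₂ θ ψ : Matrix m m K} {I : Finset m}

lemma core_coordSubspace_eq_bot (hm : 256 ≤ Fintype.card m) (hδ : ¬ IsDegenerate δ)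
    (hI : IsLightSet I) : core δ (coordSubspace K I) = ⊥ := by
  by_contra h_core
  refine hδ ⟨1, mem_Icc.2 ⟨le_rfl, by omega⟩, I, fun _ ↦ 0, hI, fun _ ↦ isLight_zero, ?_⟩
  have h_finrank := Nat.pos_of_ne_zero (Submodule.finrank_eq_zero.not.2 h_core)
  rw [Set.range_const, Submodule.span_zero_singleton, bot_sup_eq]
  omega

lemma two_mul_finrank_core_lt_rank (hδ : ¬ IsDegenerate δ) (hI : IsLightSet I)
    (hθ : ∀ j, IsLight (θ.col j)) (hθ_ne : θ ≠ 0) (hθ_rank : 256 * θ.rank ≤ Fintype.card m) :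
    2 * finrank K (core δ (LinearMap.range θ.mulVecLin ⊔ coordSubspace K I)) < θ.rank := by
  by_contra! h_core
  obtain ⟨v, hv_col, hv_span, -⟩ :=
    Submodule.exists_fun_fin_finrank_span_eq K (Set.range θ.col)
  rw [range_mulVecLin, ← hv_span] at h_core
  rw [rank_eq_finrank_span_cols] at h_core hθ_rank
  have h_pos : 0 < finrank K (Submodule.span K (Set.range θ.col)) := by
    refine Nat.pos_of_ne_zero fun h ↦ hθ_ne ?_
    rw [Submodule.finrank_eq_zero, Submodule.span_eq_bot, Set.forall_mem_range] at h
    exact ext_col h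
  refine hδ ⟨_, mem_Icc.2 ⟨h_pos, by omega⟩, I, v, hI, fun i ↦ ?_, h_core⟩
  obtain ⟨j, hj⟩ := hv_col i
  exact hj ▸ hθ j

theorem exists_eq_boundary_of_light (hm : 256 ≤ Fintype.card m) (hδ₁ : δ₁ * δ₁ = 0)
    (h_degen₁ : ¬ IsDegenerate δ₁) (h_degen₂ : ¬ IsDegenerate δ₂)
    (h_rank : ¬ HasHighRankLightCycle δ₁ δ₂)
    (h_light : 2 ^ 34 * hammingNorm ψ.vec ≤ Fintype.card m ^ 2) (hψ : δ₁ * ψ = ψ * δ₂ᵀ) :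
    ∃ φ, ψ = δ₁ * φ + φ * δ₂ᵀ := by
  classical
  have : Nonempty m := Fintype.card_pos_iff.1 (by omega)
  set I := heavyRows ψ
  set J := heavyRows ψᵀ
  have hI : IsLightSet I := isLightSet_heavyRows (by rwa [← sq])
  have hJ : IsLightSet J := isLightSet_heavyRows (by rwa [hammingNorm_vec_transpose, ← sq])
  have hI_core := core_coordSubspace_eq_bot hm h_degen₁ hI
  have hJ_core := core_coordSubspace_eq_bot hm h_degen₂ hJ
  set θ := eraseCoords K I * ψ * eraseCoords K J with hθ
  by_cases hθ_zero : θ = 0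
  · exact exists_eq_boundary_of_erase_eq_zero hδ₁ hI_core hJ_core hψ hθ_zero
  exfalso
  have hψ_rank : 256 * ψ.rank ≤ Fintype.card m := by
    by_contra! h
    refine h_rank ⟨ψ, ?_, h.le, hψ⟩
    change 2 ^ 17 * hammingNorm ψ.vec ≤ Fintype.card (m × m)
    rw [Fintype.card_prod]
    linarith
  have hθ_rank : θ.rank ≤ ψ.rank := (rank_mul_le_left _ _).trans (rank_mul_le_right _ _)
  have hθ_transpose : θᵀ = eraseCoords K J * ψᵀ * eraseCoords K I := by
    simp only [hθ, transpose_mul, eraseCoords_transpose, Matrix.mul_assoc]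
  have hθ_col (j : m) : IsLight (θ.col j) := isLight_col_erase ψ I j
  have hθ_row (i : m) : IsLight (θᵀ.col i) := hθ_transpose ▸ isLight_col_erase ψᵀ J i
  have h₁ := two_mul_finrank_core_lt_rank h_degen₁ hI hθ_col hθ_zero (by omega)
  have h₂ := two_mul_finrank_core_lt_rank h_degen₂ hJ hθ_row (by simpa using hθ_zero)
    (by rw [rank_transpose]; omega)
  have h_le := rank_erase_le_finrank_core_add hδ₁ hI_core hψ hθ
  rw [rank_transpose] at h₂
  omega

end LightCycles

section BoundaryOperators

open Filter

/-- The product of `δ₁` and `δ₂` has a cycle of weight less than `c * M ^ 2` that is not a boundary.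
Since the weight of a nontrivial cycle is positive, the condition `0 < mwt ψ` is left out. -/
def HasLightNontrivialCycle {M : ℕ} (c : ℝ) (δ₁ δ₂ : Matrix (Fin M) (Fin M) (ZMod 2)) : Prop :=
  ∃ ψ : Matrix (Fin M) (Fin M) (ZMod 2), (mwt ψ : ℝ) < c * (M : ℝ) ^ 2 ∧
    δ₁ * ψ + ψ * δ₂ᵀ = 0 ∧ ¬ ∃ φ, ψ = δ₁ * φ + φ * δ₂ᵀ

open Classical in
/-- The boundary operators of size `M` and homological dimension `H`. -/
noncomputable def boundaryOperators (M H : ℕ) : Finset (Matrix (Fin M) (Fin M) (ZMod 2)) :=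
  {δ | δ * δ = 0 ∧ M - 2 * δ.rank = H}

variable {M H L : ℕ} {δ δ₁ δ₂ : Matrix (Fin M) (Fin M) (ZMod 2)}

lemma mem_boundaryOperators :
    δ ∈ boundaryOperators M H ↔ δ * δ = 0 ∧ M - 2 * δ.rank = H := by
  simp [boundaryOperators]

lemma natCard_boundaryOperators :
    Nat.card {δ : Matrix (Fin M) (Fin M) (ZMod 2) // δ * δ = 0 ∧ M - 2 * δ.rank = H} =
      #(boundaryOperators M H) := by
  classical
  rw [Nat.card_eq_fintype_card, Fintype.card_subtype, boundaryOperators]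

lemma transpose_mem_boundaryOperators : δᵀ ∈ boundaryOperators M H ↔ δ ∈ boundaryOperators M H := by
  rw [mem_boundaryOperators, mem_boundaryOperators, ← transpose_mul, transpose_eq_zero,
    rank_transpose]

lemma isConjInvariantEnsemble_boundaryOperators (hH : 1 ≤ H) :
    IsConjInvariantEnsemble (boundaryOperators M H) ((M - H) / 2) where
  mul_self δ hδ := (mem_boundaryOperators.1 hδ).1
  rank_eq δ hδ := by
    have h_dim := (mem_boundaryOperators.1 hδ).2
    omega
  conj_mem δ hδ g := by
    obtain ⟨h_sq, h_dim⟩ := mem_boundaryOperators.1 hδ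
    refine mem_boundaryOperators.2 ⟨?_, ?_⟩
    · simp only [mul_assoc, Units.inv_mul_cancel_left]
      rw [← mul_assoc δ, h_sq, zero_mul, mul_zero]
    · rwa [rank_mul_eq_left_of_isUnit_det _ _ ((isUnit_iff_isUnit_det _).1 g⁻¹.isUnit),
        rank_mul_eq_right_of_isUnit_det _ _ ((isUnit_iff_isUnit_det _).1 g.isUnit)]

lemma mwt_eq_hammingNorm_vec (ψ : Matrix (Fin M) (Fin M) (ZMod 2)) :
    mwt ψ = hammingNorm ψ.vec :=
  card_equiv (Equiv.prodComm _ _) fun p ↦ by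
    rw [mem_filter, mem_filter]
    simp [vec]

lemma isDegenerate_or_of_hasLightNontrivialCycle (hM : 256 ≤ M) (hδ₁ : δ₁ * δ₁ = 0)
    (h : HasLightNontrivialCycle (1 / 2 ^ 34) δ₁ δ₂) :
    (IsDegenerate δ₁ ∨ IsDegenerate δ₂) ∨ HasHighRankLightCycle δ₁ δ₂ := by
  obtain ⟨ψ, hψ_light, hψ_cycle, hψ_nontrivial⟩ := h
  by_contra! h_good
  have hψ_light' : (2 ^ 34 * mwt ψ : ℝ) ≤ (M : ℝ) ^ 2 := by linarith
  refine hψ_nontrivial (exists_eq_boundary_of_light (by simpa) hδ₁ h_good.1.1 h_good.1.2 h_good.2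
    ?_ ?_)
  · rw [← mwt_eq_hammingNorm_vec, Fintype.card_fin]
    exact_mod_cast hψ_light'
  · rw [eq_neg_of_add_eq_zero_left hψ_cycle, ZModModule.neg_eq_self]

namespace IsConjInvariantEnsemble

variable {B : Finset (Matrix (Fin M) (Fin M) (ZMod 2))}

lemma unifProb_hasLightNontrivialCycle_le (hB : IsConjInvariantEnsemble B L) (hL : M ≤ 4 * L)
    (hM : 256 ≤ M) :
    unifProb (B ×ˢ B) (fun p ↦ HasLightNontrivialCycle (1 / 2 ^ 34) p.1 p.2) ≤
      3 * (M * 2 ^ (-(M : ℝ) / 32)) := by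
  set r : ℝ := M * 2 ^ (-(M : ℝ) / 32)
  have hr_nonneg : 0 ≤ r := by positivity
  have hM' : (256 : ℝ) ≤ M := mod_cast hM
  have h_degen : unifProb B IsDegenerate ≤ r := by
    simpa using hB.unifProb_isDegenerate_le (by simpa)
  have h_rank (δ₁ : Matrix (Fin M) (Fin M) (ZMod 2)) :
      unifProb B (HasHighRankLightCycle δ₁) ≤ r := by
    calc unifProb B (HasHighRankLightCycle δ₁)
        ≤ 2 ^ (-(M : ℝ) ^ 2 / 4096) := by
          simpa using hB.unifProb_hasHighRankLightCycle_le (by simpa) δ₁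
      _ ≤ 2 ^ (-(M : ℝ) / 32) :=
          Real.rpow_le_rpow_of_exponent_le one_le_two (by nlinarith)
      _ ≤ r := le_mul_of_one_le_left (by positivity) (by linarith)
  exact (unifProb_mono fun p hp ↦ isDegenerate_or_of_hasLightNontrivialCycle hM
    (hB.mul_self _ (mem_product.1 hp).1)).trans
      (unifProb_product_or_le hr_nonneg h_degen fun δ₁ _ ↦ h_rank δ₁)

end IsConjInvariantEnsemble

/- Transposing both operators turns cocycles into cycles. -/
lemma unifProb_boundaryOperators_light_le (hM : 256 ≤ M) (hH : 1 ≤ H) (hHM : 4 * H ≤ M) :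
    unifProb (boundaryOperators M H ×ˢ boundaryOperators M H)
        (fun p ↦ HasLightNontrivialCycle (1 / 2 ^ 34) p.1 p.2 ∨
          HasLightNontrivialCycle (1 / 2 ^ 34) p.1ᵀ p.2ᵀ) ≤
      6 * (M * 2 ^ (-(M : ℝ) / 32)) := by
  set B := boundaryOperators M H
  have h_cycle := (isConjInvariantEnsemble_boundaryOperators (M := M)
    hH).unifProb_hasLightNontrivialCycle_le (by omega) hM
  have h_cocycle : unifProb (B ×ˢ B) (fun p ↦ HasLightNontrivialCycle (1 / 2 ^ 34) p.1ᵀ p.2ᵀ) =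
      unifProb (B ×ˢ B) (fun p ↦ HasLightNontrivialCycle (1 / 2 ^ 34) p.1 p.2) := by
    let e : Matrix (Fin M) (Fin M) (ZMod 2) ≃ Matrix (Fin M) (Fin M) (ZMod 2) :=
      (transposeAddEquiv _ _ _).toEquiv
    refine unifProb_comp_equiv (e.prodCongr e) (fun p ↦ ?_)
      fun p ↦ HasLightNontrivialCycle (1 / 2 ^ 34) p.1 p.2
    simp [e, B, transpose_mem_boundaryOperators]
  refine (unifProb_or_le _ _ _).trans ?_
  rw [h_cocycle]
  linarith

lemma tendsto_mul_two_rpow_neg_div :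
    Tendsto (fun M : ℕ ↦ 6 * (M * 2 ^ (-(M : ℝ) / 32) : ℝ)) atTop (nhds 0) := by
  have h := (tendsto_self_mul_const_pow_of_lt_one (r := (2 : ℝ) ^ (-(1 : ℝ) / 32)) (by positivity)
    (Real.rpow_lt_one_of_one_lt_of_neg one_lt_two (by norm_num))).const_mul 6
  rw [mul_zero] at h
  refine h.congr fun M ↦ ?_
  rw [← Real.rpow_mul_natCast two_pos.le]
  ring_nf

end BoundaryOperators

end ProductCode

open ProductCode

/-- For sufficiently small `c` and encoding rate `ρ`, the probability that the
homological product of two uniformly random boundary operators with homological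
dimension `H ≤ ρM` has distance less than `cM²` is `o(1)`: the number of pairs
`(δ₁, δ₂)` from the ensemble `B` admitting a nontrivial cycle or cocycle of weight less
than `cM²` is at most `ε·|B|²`, for all `M` large enough (depending on `ε`). -/
theorem random_product_code_linear_distance :
    ∃ c : ℝ, 0 < c ∧ ∃ ρ : ℝ, 0 < ρ ∧ ∀ ε : ℝ, 0 < ε → ∃ M₀ : ℕ,
      ∀ M : ℕ, M₀ ≤ M → ∀ H : ℕ, 1 ≤ H → (H : ℝ) ≤ ρ * M →
        (Nat.card {p : Matrix (Fin M) (Fin M) (ZMod 2) ×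
            Matrix (Fin M) (Fin M) (ZMod 2) //
            (p.1 * p.1 = 0 ∧ M - 2 * p.1.rank = H) ∧
            (p.2 * p.2 = 0 ∧ M - 2 * p.2.rank = H) ∧
            ∃ ψ : Matrix (Fin M) (Fin M) (ZMod 2),
              0 < mwt ψ ∧ (mwt ψ : ℝ) < c * (M : ℝ) ^ 2 ∧
              ((p.1 * ψ + ψ * p.2ᵀ = 0 ∧
                ¬ ∃ φ : Matrix (Fin M) (Fin M) (ZMod 2), ψ = p.1 * φ + φ * p.2ᵀ) ∨
               (p.1ᵀ * ψ + ψ * p.2 = 0 ∧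
                ¬ ∃ φ : Matrix (Fin M) (Fin M) (ZMod 2), ψ = p.1ᵀ * φ + φ * p.2))} : ℝ) ≤
          ε * (Nat.card {δ : Matrix (Fin M) (Fin M) (ZMod 2) //
            δ * δ = 0 ∧ M - 2 * δ.rank = H} : ℝ) ^ 2 := by
  refine ⟨1 / 2 ^ 34, by positivity, 1 / 4, by positivity, fun ε hε ↦ ?_⟩
  obtain ⟨M₁, hM₁⟩ := Filter.eventually_atTop.1
    (tendsto_mul_two_rpow_neg_div.eventually (gt_mem_nhds hε))
  refine ⟨max M₁ 256, fun M hM H hH hHM ↦ ?_⟩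
  obtain ⟨hM₁M, hM256⟩ := max_le_iff.1 hM
  have h4H : 4 * H ≤ M := by
    have : (4 * H : ℝ) ≤ M := by linarith
    exact_mod_cast this
  have h_prob := (unifProb_boundaryOperators_light_le hM256 hH h4H).trans (hM₁ M hM₁M).le
  rw [natCard_boundaryOperators]
  refine (natCard_subtype_le_unifProb_mul_card
    (B := boundaryOperators M H ×ˢ boundaryOperators M H) ?_).trans
      ((mul_le_mul_of_nonneg_right h_prob (Nat.cast_nonneg _)).trans_eq ?_)
  · rintro ⟨δ₁, δ₂⟩ ⟨hδ₁, hδ₂, ψ, -, hψ_light, hψ⟩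
    refine ⟨Finset.mem_product.2 ⟨mem_boundaryOperators.2 hδ₁, mem_boundaryOperators.2 hδ₂⟩, ?_⟩
    exact hψ.imp (fun h ↦ ⟨ψ, hψ_light, h⟩) fun h ↦ ⟨ψ, hψ_light, by simpa using h⟩
  · rw [Finset.card_product, Nat.cast_mul, sq]
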